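/- arXiv:1604.02558 — 6 statements merged into one kernel-verified Lean document; each statement's English description precedes it below -/
import Mathlib

section
/- Let C ∈ ℝ with V'(C) = 0 and V''(C) ≠ 0, and let θ be the constant function θ(s) = C on [a,b], which is a stationary solution of θ'' + V'(θ) = 0 with natural boundary conditions θ'(a) = θ'(b) = 0. Then θ is a directional local minimum of the energy functional E with A = 0 (i.e., for every Neumann-admissible τ there exists M > 0 such that E[θ + ε·τ] > E[θ] for all ε with 0 < |ε| ≤ M) if and only if V''(C) < 0. -/
/-!
Let `θ ≡ C`. The kinetic part of the energy vanishes at `θ` and is nonnegative elsewhere, so if `C`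
is a strict local maximum of `V`, every small perturbation of `θ` raises the energy: `τ` is bounded
on the compact interval, hence `C + ε τ` stays where `V ≤ V C`, with strict inequality wherever
`τ ≠ 0`. Conversely, the constant perturbation `τ ≡ 1` satisfies the Neumann conditions and has no
kinetic energy, so minimality along it says exactly that `C` is a strict local maximum of `V`. The
second derivative test then decides whether `C` is one.
-/

open Set Filter Topology

section DerivativeTest

variable {f : ℝ → ℝ} {x₀ : ℝ}

theorem eventually_nhdsGT_lt_of_deriv_neg (hf : ContinuousAt f x₀)
    (hf' : ∀ᶠ x in 𝓝[>] x₀, deriv f x < 0) : ∀ᶠ x in 𝓝[>] x₀, f x < f x₀ := by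
  obtain ⟨c, hc, hneg⟩ := (nhdsGT_basis x₀).eventually_iff.1 hf'
  have hcont : ContinuousOn f (Ico x₀ c) := fun x hx => by
    rcases hx.1.eq_or_lt with rfl | hlt
    · exact hf.continuousWithinAt
    · exact (differentiableAt_of_deriv_ne_zero
        (hneg ⟨hlt, hx.2⟩).ne).continuousAt.continuousWithinAt
  have hanti : StrictAntiOn f (Ico x₀ c) :=
    strictAntiOn_of_deriv_neg (convex_Ico x₀ c) hcont fun x hx =>
      hneg (by rwa [interior_Ico] at hx)
  filter_upwards [Ioo_mem_nhdsGT hc] with x hx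
  exact hanti (left_mem_Ico.2 hc) (Ioo_subset_Ico_self hx) hx.1

theorem eventually_nhdsLT_lt_of_deriv_pos (hf : ContinuousAt f x₀)
    (hf' : ∀ᶠ x in 𝓝[<] x₀, 0 < deriv f x) : ∀ᶠ x in 𝓝[<] x₀, f x < f x₀ := by
  obtain ⟨c, hc, hpos⟩ := (nhdsLT_basis x₀).eventually_iff.1 hf'
  have hcont : ContinuousOn f (Ioc c x₀) := fun x hx => by
    rcases hx.2.eq_or_lt with rfl | hlt
    · exact hf.continuousWithinAt
    · exact (differentiableAt_of_deriv_ne_zero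
        (hpos ⟨hx.1, hlt⟩).ne').continuousAt.continuousWithinAt
  have hmono : StrictMonoOn f (Ioc c x₀) :=
    strictMonoOn_of_deriv_pos (convex_Ioc c x₀) hcont fun x hx =>
      hpos (by rwa [interior_Ioc] at hx)
  filter_upwards [Ioo_mem_nhdsLT hc] with x hx
  exact hmono (Ioo_subset_Ioc_self hx) (right_mem_Ioc.2 hc) hx.2

theorem eventually_nhdsNE_lt_of_deriv_deriv_neg (hf : ContinuousAt f x₀) (hf' : deriv f x₀ = 0)
    (hf'' : deriv (deriv f) x₀ < 0) : ∀ᶠ x in 𝓝[≠] x₀, f x < f x₀ := by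
  have hsign := (eventually_nhdsWithin_sign_eq_of_deriv_neg hf'' hf').filter_mono
    (nhdsWithin_le_nhds (s := {x₀}ᶜ))
  rw [← nhdsLT_sup_nhdsGT, eventually_sup]
  exact ⟨eventually_nhdsLT_lt_of_deriv_pos hf (deriv_pos_left_of_sign_deriv hsign),
    eventually_nhdsGT_lt_of_deriv_neg hf (deriv_neg_right_of_sign_deriv hsign)⟩

theorem eventually_nhdsNE_lt_iff_deriv_deriv_neg (hf : ContinuousAt f x₀) (hf' : deriv f x₀ = 0)
    (hf'' : deriv (deriv f) x₀ ≠ 0) :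
    (∀ᶠ x in 𝓝[≠] x₀, f x < f x₀) ↔ deriv (deriv f) x₀ < 0 := by
  refine ⟨fun hmax => ?_, eventually_nhdsNE_lt_of_deriv_deriv_neg hf hf'⟩
  by_contra hneg
  have hmin : IsLocalMin f x₀ :=
    isLocalMin_of_deriv_deriv_pos (hf''.symm.lt_of_le (not_lt.1 hneg)) hf' hf
  obtain ⟨x, hlt, hle⟩ := (hmax.and (hmin.filter_mono nhdsWithin_le_nhds)).exists
  exact hlt.not_ge hle

theorem eventually_continuousAt_of_deriv_deriv_ne_zero (hf : ContinuousAt f x₀)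
    (hf'' : deriv (deriv f) x₀ ≠ 0) : ∀ᶠ x in 𝓝 x₀, ContinuousAt f x := by
  have hderiv : ∀ᶠ x in 𝓝[≠] x₀, deriv f x ≠ 0 :=
    (differentiableAt_of_deriv_ne_zero hf'').hasDerivAt.eventually_ne hf''
  rw [← nhdsNE_sup_pure x₀, eventually_sup]
  exact ⟨hderiv.mono fun x hx => (differentiableAt_of_deriv_ne_zero hx).continuousAt, hf⟩

end DerivativeTest

theorem eventually_forall_mem_add_smul {𝕜 E : Type*} [NontriviallyNormedField 𝕜]
    [AddCommGroup E] [Module 𝕜 E] [TopologicalSpace E] [ContinuousAdd E] {S : Set E}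
    (hS : Bornology.IsVonNBounded 𝕜 S) {x₀ : E} {p : E → Prop} (hp : ∀ᶠ x in 𝓝 x₀, p x) :
    ∀ᶠ c in 𝓝 (0 : 𝕜), ∀ v ∈ S, p (x₀ + c • v) := by
  have htranslate : Tendsto (x₀ + ·) (𝓝 (0 : E)) (𝓝 x₀) := by
    simpa only [add_zero] using (continuous_const_add x₀).tendsto 0
  have hmem : {v | p (x₀ + v)} ∈ 𝓝 (0 : E) := htranslate.eventually hp
  exact (hS hmem).eventually_nhds_zero (mem_of_mem_nhds hmem)

theorem exists_forall_abs_le_iff_eventually_nhdsNE_zero {p : ℝ → Prop} :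
    (∃ M > 0, ∀ ε : ℝ, 0 < |ε| → |ε| ≤ M → p ε) ↔ ∀ᶠ ε in 𝓝[≠] 0, p ε := by
  rw [(nhdsWithin_hasBasis Metric.nhds_basis_closedBall {(0 : ℝ)}ᶜ).eventually_iff]
  simp only [mem_inter_iff, mem_closedBall_zero_iff, Real.norm_eq_abs, mem_compl_singleton_iff,
    abs_pos, and_imp]
  exact exists_congr fun M => and_congr_right fun _ => forall_congr' fun ε => imp.swap

/-- The energy functional `E` with `A = 0`. The derivative of the curve `θ` is passed as a separate
argument `θ'`. -/
noncomputable def energy (V : ℝ → ℝ) (a b : ℝ) (θ θ' : ℝ → ℝ) : ℝ :=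
  ∫ s in a..b, (θ' s ^ 2 / 2 - V (θ s))

/-- The curve `θ`, with derivative `θ'`, is a directional local minimum of the energy under
Neumann-admissible perturbations: along each of them the energy has a strict local minimum at
`ε = 0`. A perturbation is given by `τ` together with its derivative `τ'`; only its values on
`[a, b]` matter. -/
def IsDirectionalLocalMin (V : ℝ → ℝ) (a b : ℝ) (θ θ' : ℝ → ℝ) : Prop :=
  ∀ τ τ' : ℝ → ℝ, (∀ s ∈ Icc a b, HasDerivAt τ (τ' s) s) → ContinuousOn τ' (Icc a b) →
    (∃ s ∈ Icc a b, τ s ≠ 0) → τ' a = 0 → τ' b = 0 →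
    ∃ M > 0, ∀ ε : ℝ, 0 < |ε| → |ε| ≤ M →
      energy V a b θ θ' < energy V a b (fun s => θ s + ε * τ s) (fun s => θ' s + ε * τ' s)

section Energy

variable {V : ℝ → ℝ} {a b C : ℝ}

theorem energy_const_lt_energy_const_iff (hab : a < b) {D : ℝ} :
    energy V a b (fun _ => C) (fun _ => 0) < energy V a b (fun _ => D) (fun _ => 0) ↔
      V D < V C := by
  simp only [energy, intervalIntegral.integral_const, smul_eq_mul]
  rw [mul_lt_mul_iff_right₀ (sub_pos.2 hab), sub_lt_sub_iff_left]

theorem energy_const_lt_energy (hab : a < b) {θ θ' : ℝ → ℝ}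
    (hV : ContinuousOn (fun s => V (θ s)) (Icc a b)) (hθ' : ContinuousOn θ' (Icc a b))
    (hle : ∀ s ∈ Icc a b, V (θ s) ≤ V C) (hlt : ∃ s ∈ Icc a b, V (θ s) < V C) :
    energy V a b (fun _ => C) (fun _ => 0) < energy V a b θ θ' := by
  obtain ⟨c, hc, hVc⟩ := hlt
  refine intervalIntegral.integral_lt_integral_of_continuousOn_of_le_of_exists_lt hab
    continuousOn_const (((hθ'.pow 2).div_const 2).sub hV) (fun s hs => ?_) ⟨c, hc, ?_⟩
  · linarith [hle s (Ioc_subset_Icc_self hs), sq_nonneg (θ' s)]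
  · linarith [sq_nonneg (θ' c)]

theorem eventually_energy_const_lt_energy (hab : a < b) (hV : ∀ᶠ x in 𝓝 C, ContinuousAt V x)
    (hmax : ∀ᶠ x in 𝓝[≠] C, V x < V C) {τ τ' : ℝ → ℝ} (hτ : ContinuousOn τ (Icc a b))
    (hτ' : ContinuousOn τ' (Icc a b)) (hne : ∃ s ∈ Icc a b, τ s ≠ 0) :
    ∀ᶠ ε in 𝓝[≠] (0 : ℝ), energy V a b (fun _ => C) (fun _ => 0) <
      energy V a b (fun s => C + ε * τ s) (fun s => 0 + ε * τ' s) := by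
  have hbounded : Bornology.IsVonNBounded ℝ (τ '' Icc a b) :=
    (NormedSpace.isVonNBounded_iff ℝ).2 (isCompact_Icc.image_of_continuousOn hτ).isBounded
  have hnear : ∀ᶠ ε in 𝓝[≠] (0 : ℝ), ∀ s ∈ Icc a b,
      ContinuousAt V (C + ε * τ s) ∧ (C + ε * τ s ≠ C → V (C + ε * τ s) < V C) := by
    have hscaled := eventually_forall_mem_add_smul hbounded
      (hV.and (eventually_nhdsWithin_iff.1 hmax))
    simpa only [forall_mem_image, smul_eq_mul, mem_compl_singleton_iff] using
      hscaled.filter_mono nhdsWithin_le_nhds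
  filter_upwards [hnear, self_mem_nhdsWithin] with ε hε (hε0 : ε ≠ 0)
  have hlt : ∀ s ∈ Icc a b, τ s ≠ 0 → V (C + ε * τ s) < V C := fun s hs hτs =>
    (hε s hs).2 fun h => mul_ne_zero hε0 hτs (add_eq_left.1 h)
  refine energy_const_lt_energy hab (fun s hs => ?_)
    (continuousOn_const.add (continuousOn_const.mul hτ')) (fun s hs => ?_)
    (hne.imp fun s hs => ⟨hs.1, hlt s hs.1 hs.2⟩)
  · exact (hε s hs).1.comp_continuousWithinAt (f := fun s => C + ε * τ s)
      (continuousWithinAt_const.add (continuousWithinAt_const.mul (hτ s hs)))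
  · rcases eq_or_ne (τ s) 0 with hτs | hτs
    · rw [hτs, mul_zero, add_zero]
    · exact (hlt s hs hτs).le

theorem IsDirectionalLocalMin.eventually_nhdsNE_lt (hab : a < b)
    (hmin : IsDirectionalLocalMin V a b (fun _ => C) (fun _ => 0)) :
    ∀ᶠ x in 𝓝[≠] C, V x < V C := by
  have hunit := exists_forall_abs_le_iff_eventually_nhdsNE_zero.1 <|
    hmin (fun _ => 1) (fun _ => 0) (fun s _ => hasDerivAt_const s 1) continuousOn_const
      ⟨a, left_mem_Icc.2 hab.le, one_ne_zero⟩ rfl rfl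
  simp only [mul_one, mul_zero, add_zero, energy_const_lt_energy_const_iff hab] at hunit
  rw [← add_zero C, ← map_add_left_nhdsNE, eventually_map]
  simpa only [add_zero] using hunit

theorem isDirectionalLocalMin_const_iff (hab : a < b) (hV : ∀ᶠ x in 𝓝 C, ContinuousAt V x) :
    IsDirectionalLocalMin V a b (fun _ => C) (fun _ => 0) ↔ ∀ᶠ x in 𝓝[≠] C, V x < V C :=
  ⟨IsDirectionalLocalMin.eventually_nhdsNE_lt hab, fun hmax _ _ hτ hτ' hne _ _ =>
    exists_forall_abs_le_iff_eventually_nhdsNE_zero.2 <|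
      eventually_energy_const_lt_energy hab hV hmax (HasDerivAt.continuousOn hτ) hτ' hne⟩

theorem stmt_2_general (hab : a < b) (hV : ContinuousAt V C) (hC1 : deriv V C = 0)
    (hC2 : deriv (deriv V) C ≠ 0) :
    IsDirectionalLocalMin V a b (fun _ => C) (fun _ => 0) ↔ deriv (deriv V) C < 0 :=
  (isDirectionalLocalMin_const_iff hab
    (eventually_continuousAt_of_deriv_deriv_ne_zero hV hC2)).trans
    (eventually_nhdsNE_lt_iff_deriv_deriv_neg hV hC1 hC2)

end Energy

theorem stmt_2 (a b : ℝ) (hab : a < b) (V : ℝ → ℝ) (hV : ContDiff ℝ 2 V)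
    (C : ℝ) (hC1 : deriv V C = 0) (hC2 : deriv (deriv V) C ≠ 0) :
    ((∀ τ τ' : ℝ → ℝ,
        (∀ s ∈ Set.Icc a b, HasDerivAt τ (τ' s) s) →
        ContinuousOn τ' (Set.Icc a b) →
        (∃ s ∈ Set.Icc a b, τ s ≠ 0) →
        τ' a = 0 → τ' b = 0 →
        ∃ M > 0, ∀ ε : ℝ, 0 < |ε| → |ε| ≤ M →
          (∫ s in a..b, ((ε * τ' s) ^ 2 / 2 - V (C + ε * τ s))) >
            ∫ s in a..b, (0 ^ 2 / 2 - V C)) ↔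
      deriv (deriv V) C < 0) := by
  simpa only [IsDirectionalLocalMin, energy, zero_add] using
    stmt_2_general hab hV.continuous.continuousAt hC1 hC2
end

section
/- Let θ ∈ C²([a,b],ℝ) satisfy θ''(s) + V'(θ(s)) = 0 for all s ∈ [a,b], and suppose θ'(s) ≠ 0 for every s ∈ [a,b] (the phase-plane trajectory of θ never crosses the horizontal axis, i.e., the index I equals 0). Then there exists k > 0 such that for every τ ∈ C¹([a,b],ℝ) with τ(a) = τ(b) = 0, ∫_a^b (τ'(s)² − V''(θ(s))·τ(s)²) ds ≥ k·∫_a^b τ(s)² ds. -/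
/-!
Write `q = V'' ∘ θ`. Differentiating the equation of motion shows that `u = θ'` solves the Jacobi
equation `u'' + q u = 0`, so, as `u` has no zero, `p = u' / u` solves the Riccati equation
`p' + p² + q = 0` on all of `[a, b]`. For every `C¹` function `p` and every `τ` vanishing at the
endpoints, completing the square gives `∫ (τ'² + (p' + p²) τ²) = ∫ (τ' - p τ)² ≥ 0`, which for this
`p` says that the second variation is nonnegative. To gain the term `k ∫ τ²`, subtract from `p` a
rapidly growing exponential, which lowers `p' + p²` by a positive constant on `[a, b]`.
-/

open Set

/-- The second variation `∫ (τ'² - q τ²)` of the action along a path `θ`, where `q s` stands for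
`V'' (θ s)`. The derivative `τ'` of the variation `τ` is passed as a separate argument. -/
noncomputable def secondVariation (q : ℝ → ℝ) (a b : ℝ) (τ τ' : ℝ → ℝ) : ℝ :=
  ∫ s in a..b, (τ' s ^ 2 - q s * τ s ^ 2)

section Riccati

variable {a b : ℝ} {p p' q τ τ' : ℝ → ℝ}

lemma integral_sq_deriv_sub_mul_eq (hp : ∀ s ∈ uIcc a b, HasDerivAt p (p' s) s)
    (hp' : ContinuousOn p' (uIcc a b)) (hτ : ∀ s ∈ uIcc a b, HasDerivAt τ (τ' s) s)
    (hτ' : ContinuousOn τ' (uIcc a b)) :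
    ∫ s in a..b, (τ' s - p s * τ s) ^ 2 =
      (∫ s in a..b, (τ' s ^ 2 + (p' s + p s ^ 2) * τ s ^ 2)) -
        (p b * τ b ^ 2 - p a * τ a ^ 2) := by
  have hp_cont := HasDerivAt.continuousOn hp
  have hτ_cont := HasDerivAt.continuousOn hτ
  have hderiv : ∀ s ∈ uIcc a b, HasDerivAt (fun s ↦ p s * τ s ^ 2)
      (p' s * τ s ^ 2 + p s * (2 * τ s * τ' s)) s := fun s hs ↦
    ((hp s hs).mul ((hτ s hs).pow 2)).congr_deriv (by simp)
  have hint : IntervalIntegrable (fun s ↦ p' s * τ s ^ 2 + p s * (2 * τ s * τ' s))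
      MeasureTheory.volume a b := ContinuousOn.intervalIntegrable (by fun_prop)
  rw [← intervalIntegral.integral_eq_sub_of_hasDerivAt hderiv hint,
    ← intervalIntegral.integral_sub (ContinuousOn.intervalIntegrable (by fun_prop)) hint]
  congr! 2 with s
  ring

lemma mul_integral_sq_le_secondVariation_of_riccati_le {k : ℝ} (hab : a ≤ b)
    (hq : ContinuousOn q (Icc a b)) (hp : ∀ s ∈ Icc a b, HasDerivAt p (p' s) s)
    (hp' : ContinuousOn p' (Icc a b)) (hle : ∀ s ∈ Icc a b, p' s + p s ^ 2 ≤ -q s - k)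
    (hτ : ∀ s ∈ Icc a b, HasDerivAt τ (τ' s) s) (hτ' : ContinuousOn τ' (Icc a b))
    (hτa : τ a = 0) (hτb : τ b = 0) :
    k * ∫ s in a..b, τ s ^ 2 ≤ secondVariation q a b τ τ' := by
  rw [← uIcc_of_le hab] at hq hp hp' hτ hτ'
  have hp_cont := HasDerivAt.continuousOn hp
  have hτ_cont := HasDerivAt.continuousOn hτ
  have hnonneg : 0 ≤ ∫ s in a..b, (τ' s ^ 2 + (p' s + p s ^ 2) * τ s ^ 2) :=
    calc
      0 ≤ ∫ s in a..b, (τ' s - p s * τ s) ^ 2 :=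
        intervalIntegral.integral_nonneg hab fun s _ ↦ sq_nonneg _
      _ = ∫ s in a..b, (τ' s ^ 2 + (p' s + p s ^ 2) * τ s ^ 2) := by
        rw [integral_sq_deriv_sub_mul_eq hp hp' hτ hτ', hτa, hτb]
        ring
  have hmono : ∫ s in a..b, (τ' s ^ 2 + (p' s + p s ^ 2) * τ s ^ 2) ≤
      ∫ s in a..b, (τ' s ^ 2 - q s * τ s ^ 2 - k * τ s ^ 2) := by
    refine intervalIntegral.integral_mono_on hab (ContinuousOn.intervalIntegrable (by fun_prop))
      (ContinuousOn.intervalIntegrable (by fun_prop)) fun s hs ↦ ?_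
    linarith [mul_le_mul_of_nonneg_right (hle s hs) (sq_nonneg (τ s))]
  rw [intervalIntegral.integral_sub (ContinuousOn.intervalIntegrable (by fun_prop))
    (ContinuousOn.intervalIntegrable (by fun_prop)),
    intervalIntegral.integral_const_mul] at hmono
  exact sub_nonneg.1 (hnonneg.trans hmono)

lemma exists_riccati_le_sub_pos (hp : ∀ s ∈ Icc a b, HasDerivAt p (p' s) s)
    (hp' : ContinuousOn p' (Icc a b)) :
    ∃ k > 0, ∃ r r' : ℝ → ℝ, (∀ s ∈ Icc a b, HasDerivAt r (r' s) s) ∧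
      ContinuousOn r' (Icc a b) ∧
      ∀ s ∈ Icc a b, r' s + r s ^ 2 ≤ p' s + p s ^ 2 - k := by
  obtain ⟨C, hC⟩ := isCompact_Icc.exists_bound_of_continuousOn (HasDerivAt.continuousOn hp)
  -- `φ' + 2 p φ ≥ 2 φ` because the rate is `2 C + 2`, while `φ² ≤ φ` because `φ ≤ 1` on `[a, b]`.
  let φ : ℝ → ℝ := fun s ↦ Real.exp ((2 * C + 2) * (s - b))
  have hφ_deriv (s : ℝ) : HasDerivAt φ ((2 * C + 2) * φ s) s :=
    (((hasDerivAt_id s).sub_const b).const_mul (2 * C + 2)).exp.congr_deriv <| by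
      simp only [φ, id_eq]
      ring
  refine ⟨φ a, Real.exp_pos _, fun s ↦ p s - φ s, fun s ↦ p' s - (2 * C + 2) * φ s,
    fun s hs ↦ (hp s hs).sub (hφ_deriv s), by fun_prop, fun s hs ↦ ?_⟩
  have hp_bound : |p s| ≤ C := hC s hs
  have hrate : 0 ≤ 2 * C + 2 := by linarith [abs_nonneg (p s)]
  have hφ_ge : φ a ≤ φ s :=
    Real.exp_le_exp.2 (mul_le_mul_of_nonneg_left (by linarith [hs.1]) hrate)
  have hφ_le_one : φ s ≤ 1 :=
    Real.exp_le_one_iff.2 (mul_nonpos_of_nonneg_of_nonpos hrate (by linarith [hs.2]))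
  have hgain : φ s * 1 ≤ φ s * (2 * C + 2 + 2 * p s - φ s) :=
    mul_le_mul_of_nonneg_left (by linarith [neg_le_of_abs_le hp_bound]) (Real.exp_pos _).le
  linarith

end Riccati

lemma hasDerivAt_div_of_jacobi {u u' : ℝ → ℝ} {c s : ℝ} (hu : HasDerivAt u (u' s) s)
    (hu' : HasDerivAt u' (-(c * u s)) s) (hne : u s ≠ 0) :
    HasDerivAt (fun t ↦ u' t / u t) (-c - (u' s / u s) ^ 2) s :=
  (hu'.div hu hne).congr_deriv (by field_simp)

theorem exists_pos_mul_integral_sq_le_secondVariation_of_jacobi_ne_zero {a b : ℝ}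
    {q u u' : ℝ → ℝ} (hab : a ≤ b) (hq : ContinuousOn q (Icc a b))
    (hu : ∀ s ∈ Icc a b, HasDerivAt u (u' s) s)
    (hu' : ∀ s ∈ Icc a b, HasDerivAt u' (-(q s * u s)) s) (hne : ∀ s ∈ Icc a b, u s ≠ 0) :
    ∃ k > 0, ∀ τ τ' : ℝ → ℝ, (∀ s ∈ Icc a b, HasDerivAt τ (τ' s) s) →
      ContinuousOn τ' (Icc a b) → τ a = 0 → τ b = 0 →
      k * ∫ s in a..b, τ s ^ 2 ≤ secondVariation q a b τ τ' := by
  have hriccati : ∀ s ∈ Icc a b,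
      HasDerivAt (fun t ↦ u' t / u t) (-q s - (u' s / u s) ^ 2) s := fun s hs ↦
    hasDerivAt_div_of_jacobi (hu s hs) (hu' s hs) (hne s hs)
  obtain ⟨k, hk, r, r', hr, hr', hle⟩ := exists_riccati_le_sub_pos hriccati
    (hq.neg.sub ((HasDerivAt.continuousOn hriccati).pow 2))
  simp only [sub_add_cancel] at hle
  exact ⟨k, hk, fun _ _ ↦ mul_integral_sq_le_secondVariation_of_riccati_le hab hq hr hr' hle⟩

theorem stmt_5 (a b : ℝ) (hab : a < b) (V : ℝ → ℝ) (hV : ContDiff ℝ 2 V)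
    (θ θ' θ'' : ℝ → ℝ)
    (hθ1 : ∀ s ∈ Set.Icc a b, HasDerivAt θ (θ' s) s)
    (hθ2 : ∀ s ∈ Set.Icc a b, HasDerivAt θ' (θ'' s) s)
    (hθc : ContinuousOn θ'' (Set.Icc a b))
    (hEL : ∀ s ∈ Set.Icc a b, θ'' s + deriv V (θ s) = 0)
    (hI0 : ∀ s ∈ Set.Icc a b, θ' s ≠ 0) :
    ∃ k > 0, ∀ τ τ' : ℝ → ℝ,
      (∀ s ∈ Set.Icc a b, HasDerivAt τ (τ' s) s) →
      ContinuousOn τ' (Set.Icc a b) →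
      τ a = 0 → τ b = 0 →
      (∫ s in a..b, (τ' s ^ 2 - deriv (deriv V) (θ s) * τ s ^ 2)) ≥
        k * ∫ s in a..b, τ s ^ 2 := by
  have hV' : ContDiff ℝ 1 (deriv V) := hV.deriv'
  have hV''θ : ContinuousOn (fun s ↦ deriv (deriv V) (θ s)) (Icc a b) :=
    (hV'.continuous_deriv le_rfl).comp_continuousOn (HasDerivAt.continuousOn hθ1)
  have hθ'_deriv : ∀ s ∈ Icc a b, HasDerivAt θ' (-deriv V (θ s)) s := fun s hs ↦
    eq_neg_of_add_eq_zero_left (hEL s hs) ▸ hθ2 s hs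
  have hV'θ_deriv : ∀ s ∈ Icc a b,
      HasDerivAt (fun t ↦ -deriv V (θ t)) (-(deriv (deriv V) (θ s) * θ' s)) s := fun s hs ↦
    ((hV'.differentiable one_ne_zero (θ s)).hasDerivAt.comp s (hθ1 s hs)).neg
  exact exists_pos_mul_integral_sq_le_secondVariation_of_jacobi_ne_zero hab.le hV''θ
    hθ'_deriv hV'θ_deriv hI0
end

section
/- Let θ ∈ C²([a,b],ℝ) satisfy θ''(s) + V'(θ(s)) = 0 for all s ∈ [a,b], let c ∈ (a,b] be such that θ'(c) = 0, θ'(s) ≠ 0 for all s ∈ [a,b] with s ≠ c, and V'(θ(c)) ≠ 0. Fix d ∈ [a,c) and define μ(s) = θ'(s)·∫_d^s (1/θ'(t)²) dt for s ∈ [d,c). Then μ(s) tends to 1/V'(θ(c)) as s tends to c from the left; in particular the limit does not depend on d. -/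
/-!
Near a simple zero `c` of `f` with slope `m`, the integrand `1 / f ^ 2` is asymptotic to
`1 / (m ^ 2 * (t - c) ^ 2)`. The integral of the latter diverges at `c`, so the asymptotics may be
integrated: `∫ t in d..s, 1 / f t ^ 2` is asymptotic to `1 / (m ^ 2 * (c - s))`, whatever `d` is.
Multiplying by `f s ~ m * (s - c)` gives the limit `-1 / m`. For a stationary solution, `f = θ'`
has slope `θ'' c = -V'(θ c)` at `c`.
-/

section

open Filter Topology Asymptotics Set MeasureTheory
open scoped Interval

section IntegrationOfAsymptotics

variable {l : Filter ℝ} [TendstoIxxClass Icc l l] {μ : Measure ℝ} {d : ℝ} {w : ℝ → ℝ}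

theorem exists_eventually_norm_integral_le
    {E : Type*} [NormedAddCommGroup E] [NormedSpace ℝ E] {g : ℝ → E} {ε : ℝ} [l.NeBot]
    (hε : 0 ≤ ε) (hg : ∀ᶠ s in l, IntervalIntegrable g μ d s)
    (hw : ∀ᶠ s in l, IntervalIntegrable w μ d s) (hgw : ∀ᶠ t in l, ‖g t‖ ≤ ε * w t) :
    ∃ C, ∀ᶠ s in l, ‖∫ t in d..s, g t ∂μ‖ ≤ ε * ‖∫ t in d..s, w t ∂μ‖ + C := by
  have tail_le : ∀ᶠ e in l, ∀ᶠ s in l, uIcc e s ⊆ {t | ‖g t‖ ≤ ε * w t} :=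
    ((tendsto_fst.uIcc tendsto_snd).eventually (eventually_smallSets_subset.2 hgw)).curry
  obtain ⟨e, htail, hge, hwe⟩ := (tail_le.and (hg.and hw)).exists
  refine ⟨‖∫ t in d..e, g t ∂μ‖ + ε * ‖∫ t in d..e, w t ∂μ‖, ?_⟩
  filter_upwards [htail, hg, hw] with s hs hgs hws
  have hwes : IntervalIntegrable w μ e s := hwe.symm.trans hws
  have tail_bound : ‖∫ t in e..s, g t ∂μ‖ ≤ ε * ‖∫ t in e..s, w t ∂μ‖ := by
    have hle : ∀ᵐ t ∂μ.restrict (Ι e s), ‖g t‖ ≤ ε * w t :=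
      ae_restrict_of_forall_mem measurableSet_uIoc fun t ht => hs (uIoc_subset_uIcc ht)
    simpa only [intervalIntegral.integral_const_mul, abs_mul, abs_of_nonneg hε, Real.norm_eq_abs]
      using intervalIntegral.norm_integral_le_abs_of_norm_le hle (hwes.const_mul ε)
  calc ‖∫ t in d..s, g t ∂μ‖
      = ‖(∫ t in d..e, g t ∂μ) + ∫ t in e..s, g t ∂μ‖ := by
        rw [intervalIntegral.integral_add_adjacent_intervals hge (hge.symm.trans hgs)]
    _ ≤ ‖∫ t in d..e, g t ∂μ‖ + ε * ‖∫ t in e..s, w t ∂μ‖ :=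
        (norm_add_le _ _).trans (by gcongr)
    _ = ‖∫ t in d..e, g t ∂μ‖ + ε * ‖(∫ t in d..s, w t ∂μ) - ∫ t in d..e, w t ∂μ‖ := by
        rw [intervalIntegral.integral_interval_sub_left hws hwe]
    _ ≤ ‖∫ t in d..e, g t ∂μ‖ + ε * (‖∫ t in d..s, w t ∂μ‖ + ‖∫ t in d..e, w t ∂μ‖) := by
        gcongr
        exact norm_sub_le _ _
    _ = ε * ‖∫ t in d..s, w t ∂μ‖ + (‖∫ t in d..e, g t ∂μ‖ + ε * ‖∫ t in d..e, w t ∂μ‖) := by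
        ring

theorem isLittleO_intervalIntegral {E : Type*} [NormedAddCommGroup E] [NormedSpace ℝ E]
    {g : ℝ → E} (hg : ∀ᶠ s in l, IntervalIntegrable g μ d s)
    (hw : ∀ᶠ s in l, IntervalIntegrable w μ d s) (hw_nonneg : ∀ᶠ t in l, 0 ≤ w t)
    (hw_top : Tendsto (fun s => ‖∫ t in d..s, w t ∂μ‖) l atTop) (hgw : g =o[l] w) :
    (fun s => ∫ t in d..s, g t ∂μ) =o[l] fun s => ∫ t in d..s, w t ∂μ := by
  rcases l.eq_or_neBot with rfl | _
  · simp only [isLittleO_bot]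
  refine isLittleO_iff.2 fun ε hε => ?_
  have hgw_half : ∀ᶠ t in l, ‖g t‖ ≤ ε / 2 * w t := by
    filter_upwards [hgw.def (half_pos hε), hw_nonneg] with t ht hwt
    rwa [Real.norm_of_nonneg hwt] at ht
  obtain ⟨C, hC⟩ :=
    exists_eventually_norm_integral_le (half_pos hε).le hg hw hgw_half
  have const_le : ∀ᶠ s in l, C ≤ ε / 2 * ‖∫ t in d..s, w t ∂μ‖ :=
    (hw_top.const_mul_atTop (half_pos hε)).eventually_ge_atTop C
  filter_upwards [hC, const_le] with s hs hCs
  linarith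

theorem isEquivalent_intervalIntegral {g : ℝ → ℝ}
    (hg : ∀ᶠ s in l, IntervalIntegrable g μ d s)
    (hw : ∀ᶠ s in l, IntervalIntegrable w μ d s) (hw_nonneg : ∀ᶠ t in l, 0 ≤ w t)
    (hw_top : Tendsto (fun s => ‖∫ t in d..s, w t ∂μ‖) l atTop) (hgw : g ~[l] w) :
    (fun s => ∫ t in d..s, g t ∂μ) ~[l] fun s => ∫ t in d..s, w t ∂μ := by
  have hsub : ∀ᶠ s in l, IntervalIntegrable (g - w) μ d s := by
    filter_upwards [hg, hw] with s hgs hws using hgs.sub hws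
  refine (isLittleO_intervalIntegral hsub hw hw_nonneg hw_top hgw).congr' ?_ .rfl
  filter_upwards [hg, hw] with s hgs hws using intervalIntegral.integral_sub hgs hws

end IntegrationOfAsymptotics

section InverseSquare

variable {c d s : ℝ}

theorem intervalIntegrable_inv_sub_sq (hd : d < c) (hs : s < c) :
    IntervalIntegrable (fun t => ((t - c) ^ 2)⁻¹) volume d s := by
  refine intervalIntegral.intervalIntegrable_inv (fun t ht => ?_) (by fun_prop)
  exact pow_ne_zero 2 (sub_ne_zero.2 (ht.2.trans_lt (max_lt hd hs)).ne)

theorem integral_inv_sub_sq (hd : d < c) (hs : s < c) :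
    ∫ t in d..s, ((t - c) ^ 2)⁻¹ = (c - s)⁻¹ - (c - d)⁻¹ := by
  refine intervalIntegral.integral_eq_sub_of_hasDerivAt (f := fun t => (c - t)⁻¹) (fun t ht => ?_)
    (intervalIntegrable_inv_sub_sq hd hs)
  have htc : c - t ≠ 0 := sub_ne_zero.2 (ht.2.trans_lt (max_lt hd hs)).ne'
  have hderiv := ((hasDerivAt_id' t).const_sub c).inv htc
  rwa [neg_neg, one_div, sub_sq_comm] at hderiv

theorem tendsto_inv_sub_nhdsLT {𝕜 : Type*} [Field 𝕜] [LinearOrder 𝕜] [IsStrictOrderedRing 𝕜]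
    [TopologicalSpace 𝕜] [OrderTopology 𝕜] (c : 𝕜) :
    Tendsto (fun s => (c - s)⁻¹) (𝓝[<] c) atTop := by
  refine tendsto_inv_nhdsGT_zero.comp (tendsto_nhdsWithin_iff.2 ⟨?_, ?_⟩)
  · have : ContinuousAt (fun s => c - s) c := by fun_prop
    simpa using this.tendsto.mono_left nhdsWithin_le_nhds
  · filter_upwards [self_mem_nhdsWithin] with s hs using sub_pos.2 (mem_Iio.1 hs)

theorem isEquivalent_integral_inv_sub_sq (hd : d < c) :
    (fun s => ∫ t in d..s, ((t - c) ^ 2)⁻¹) ~[𝓝[<] c] fun s => (c - s)⁻¹ := by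
  have htop := tendsto_norm_atTop_atTop.comp (tendsto_inv_sub_nhdsLT c)
  refine (IsEquivalent.refl.add_const_of_norm_tendsto_atTop (c := -(c - d)⁻¹) htop).congr_left ?_
  filter_upwards [self_mem_nhdsWithin] with s hs
  exact ((integral_inv_sub_sq hd hs).trans (sub_eq_add_neg _ _)).symm

end InverseSquare

section SimpleZero

theorem isEquivalent_mul_sub_of_hasDerivWithinAt {𝕜 : Type*} [NontriviallyNormedField 𝕜]
    {f : 𝕜 → 𝕜} {c m : 𝕜} {s : Set 𝕜} (hf : HasDerivWithinAt f m s c)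
    (hfc : f c = 0) (hm : m ≠ 0) : f ~[𝓝[s] c] fun t => m * (t - c) := by
  have hlin := (isLittleO_const_mul_right_iff hm).2 hf.isLittleO
  exact hlin.congr_left fun t => by simp [hfc, mul_comm]

variable {f : ℝ → ℝ} {c d m : ℝ}

theorem isEquivalent_integral_one_div_sq_of_isEquivalent (hdc : d < c)
    (hint : ∀ᶠ s in 𝓝[<] c, IntervalIntegrable (fun t => 1 / f t ^ 2) volume d s)
    (hm : m ≠ 0) (hf : f ~[𝓝[<] c] fun t => m * (t - c)) :
    (fun s => ∫ t in d..s, 1 / f t ^ 2) ~[𝓝[<] c] fun s => (m ^ 2 * (c - s))⁻¹ := by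
  have hmodel := isEquivalent_integral_inv_sub_sq hdc
  have hscaled : (fun t => m ^ 2 * (1 / f t ^ 2)) ~[𝓝[<] c] fun t => ((t - c) ^ 2)⁻¹ := by
    have hmul := (IsEquivalent.refl (u := fun _ => m ^ 2)).mul (hf.pow 2).inv
    refine (hmul.congr_left ?_).congr_right ?_
    · exact .of_forall fun t => by simp
    · exact .of_forall fun t => by simp [mul_pow, field]
  have hint_scaled := isEquivalent_intervalIntegral
    (hint.mono fun s hs => hs.const_mul (m ^ 2))
    (eventually_mem_nhdsWithin.mono fun s hs => intervalIntegrable_inv_sub_sq hdc hs)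
    (.of_forall fun t => by positivity)
    (tendsto_norm_atTop_atTop.comp (hmodel.symm.tendsto_atTop (tendsto_inv_sub_nhdsLT c)))
    hscaled
  have hunscaled := (IsEquivalent.refl (u := fun _ => (m ^ 2)⁻¹)).mul (hint_scaled.trans hmodel)
  refine (hunscaled.congr_left ?_).congr_right ?_
  · exact .of_forall fun s => by simp [hm]
  · exact .of_forall fun s => by simp [mul_comm]

theorem stmt_7_general (hdc : d < c) (hf : ContinuousOn f (Ico d c))
    (hf0 : ∀ t ∈ Ico d c, f t ≠ 0) (hfc : f c = 0) (hf' : HasDerivWithinAt f m (Iio c) c)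
    (hm : m ≠ 0) :
    Tendsto (fun s => f s * ∫ t in d..s, 1 / f t ^ 2) (𝓝[<] c) (𝓝 (-1 / m)) := by
  have hint : ∀ᶠ s in 𝓝[<] c, IntervalIntegrable (fun t => 1 / f t ^ 2) volume d s := by
    filter_upwards [Ico_mem_nhdsLT hdc] with s hs
    have hsub : uIcc d s ⊆ Ico d c := ordConnected_Ico.uIcc_subset (left_mem_Ico.2 hdc) hs
    exact intervalIntegral.intervalIntegrable_one_div
      (fun t ht => pow_ne_zero 2 (hf0 t (hsub ht))) ((hf.mono hsub).pow 2)
  have hfm := isEquivalent_mul_sub_of_hasDerivWithinAt hf' hfc hm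
  have hprod := hfm.mul (isEquivalent_integral_one_div_sq_of_isEquivalent hdc hint hm hfm)
  refine (hprod.trans_eventuallyEq ?_).tendsto_const
  filter_upwards [self_mem_nhdsWithin] with s hs
  have hsc : c - s ≠ 0 := sub_ne_zero.2 (ne_of_gt hs)
  simp only [Pi.mul_apply, Function.const_apply]
  field_simp
  ring

end SimpleZero

end

theorem stmt_7 (a b : ℝ) (hab : a < b) (V : ℝ → ℝ) (hV : ContDiff ℝ 2 V)
    (θ θ' θ'' : ℝ → ℝ)
    (hθ1 : ∀ s ∈ Set.Icc a b, HasDerivAt θ (θ' s) s)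
    (hθ2 : ∀ s ∈ Set.Icc a b, HasDerivAt θ' (θ'' s) s)
    (hθc : ContinuousOn θ'' (Set.Icc a b))
    (hEL : ∀ s ∈ Set.Icc a b, θ'' s + deriv V (θ s) = 0)
    (c : ℝ) (hc : c ∈ Set.Ioc a b) (hzc : θ' c = 0)
    (hnz : ∀ s ∈ Set.Icc a b, s ≠ c → θ' s ≠ 0)
    (hVc : deriv V (θ c) ≠ 0)
    (d : ℝ) (hd : d ∈ Set.Ico a c) :
    Filter.Tendsto (fun s => θ' s * ∫ t in d..s, 1 / (θ' t) ^ 2)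
      (nhdsWithin c (Set.Ico d c)) (nhds (1 / deriv V (θ c))) := by
  have hsub : Set.Ico d c ⊆ Set.Icc a b := fun s hs => ⟨hd.1.trans hs.1, hs.2.le.trans hc.2⟩
  have hcI : c ∈ Set.Icc a b := Set.Ioc_subset_Icc_self hc
  have hslope : θ'' c = -deriv V (θ c) := eq_neg_of_add_eq_zero_left (hEL c hcI)
  have hlim := stmt_7_general hd.2 (fun s hs => (hθ2 s (hsub hs)).continuousAt.continuousWithinAt)
    (fun s hs => hnz s (hsub hs) hs.2.ne) hzc (hθ2 c hcI).hasDerivWithinAt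
    (hslope ▸ neg_ne_zero.2 hVc)
  rwa [hslope, neg_div_neg_eq, ← nhdsWithin_Ico_eq_nhdsLT hd.2] at hlim
end

section
/- Let θ ∈ C²([a,b],ℝ) satisfy θ''(s) + V'(θ(s)) = 0 for all s ∈ [a,b], let c ∈ (a,b] be the unique point of [a,b] with θ'(c) = 0, and assume V'(θ(c)) ≠ 0. Let h₁ ∈ C²([a,b],ℝ) be the solution of −h₁''(s) − V''(θ(s))·h₁(s) = 0 with h₁(a) = 0 and h₁'(a) = 1. Then h₁(s) ≠ 0 for every s ∈ (a,c]. -/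
/-!
Differentiating `θ'' + V'(θ) = 0` shows that the velocity `θ'` solves the linearised equation
`u'' + V''(θ) u = 0`, the same one as `h₁`. If `h₁` had a second zero in `(a, c]`, Sturm's
separation theorem would produce a zero of `θ'` strictly between the two, hence before `c`. Sturm's theorem
is Rolle's theorem for `v / u`, whose derivative is the constant Wronskian divided by `u²`.
-/

open Set

/-- The pair `(u, u')` solves the linear equation `u'' + q u = 0` on `S`, with derivatives taken
within `S`, i.e. one-sided at the endpoints of an interval. -/
structure IsSturmSolutionOn (q u u' : ℝ → ℝ) (S : Set ℝ) : Prop where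
  hasDerivWithinAt : ∀ s ∈ S, HasDerivWithinAt u (u' s) S s
  hasDerivWithinAt_deriv : ∀ s ∈ S, HasDerivWithinAt u' (-(q s * u s)) S s

/-- The Wronskian of `u` and `v`, where `u'` and `v'` stand for their derivatives. -/
def wronskian (u u' v v' : ℝ → ℝ) (s : ℝ) : ℝ := u s * v' s - u' s * v s

namespace IsSturmSolutionOn

variable {q u u' v v' : ℝ → ℝ} {S T : Set ℝ} {a b s : ℝ}

lemma mono (hu : IsSturmSolutionOn q u u' S) (hTS : T ⊆ S) : IsSturmSolutionOn q u u' T where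
  hasDerivWithinAt s hs := (hu.hasDerivWithinAt s (hTS hs)).mono hTS
  hasDerivWithinAt_deriv s hs := (hu.hasDerivWithinAt_deriv s (hTS hs)).mono hTS

lemma hasDerivWithinAt_wronskian (hu : IsSturmSolutionOn q u u' S)
    (hv : IsSturmSolutionOn q v v' S) (hs : s ∈ S) :
    HasDerivWithinAt (wronskian u u' v v') 0 S s := by
  refine (((hu.hasDerivWithinAt s hs).mul (hv.hasDerivWithinAt_deriv s hs)).sub
    ((hu.hasDerivWithinAt_deriv s hs).mul (hv.hasDerivWithinAt s hs))).congr_deriv ?_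
  ring

lemma wronskian_eq (hu : IsSturmSolutionOn q u u' S) (hv : IsSturmSolutionOn q v v' S)
    (hS : Convex ℝ S) (ha : a ∈ S) (hb : b ∈ S) :
    wronskian u u' v v' a = wronskian u u' v v' b := by
  have h := hS.norm_image_sub_le_of_norm_hasDerivWithin_le (C := 0)
    (fun s hs => hu.hasDerivWithinAt_wronskian hv hs) (fun _ _ => norm_zero.le) hb ha
  rwa [zero_mul, norm_le_zero_iff, sub_eq_zero] at h

lemma hasDerivWithinAt_div (hu : IsSturmSolutionOn q u u' S) (hv : IsSturmSolutionOn q v v' S)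
    (hs : s ∈ S) (hne : u s ≠ 0) :
    HasDerivWithinAt (fun t => v t / u t) (wronskian u u' v v' s / u s ^ 2) S s := by
  refine ((hv.hasDerivWithinAt s hs).div (hu.hasDerivWithinAt s hs) hne).congr_deriv ?_
  rw [wronskian]
  ring

theorem exists_zero_between_zeros (hu : IsSturmSolutionOn q u u' (Icc a b))
    (hv : IsSturmSolutionOn q v v' (Icc a b)) (hab : a < b) (hva : v a = 0) (hvb : v b = 0)
    (hW : wronskian u u' v v' a ≠ 0) : ∃ s ∈ Ioo a b, u s = 0 := by
  by_contra! hne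
  have wronskian_ne_zero : ∀ s ∈ Icc a b, wronskian u u' v v' s ≠ 0 := fun s hs =>
    hu.wronskian_eq hv (convex_Icc a b) (left_mem_Icc.2 hab.le) hs ▸ hW
  have u_ne_zero : ∀ s ∈ Icc a b, u s ≠ 0 := by
    intro s hs hus
    have hvs : v s ≠ 0 := fun hvs => wronskian_ne_zero s hs (by simp [wronskian, hus, hvs])
    have hsa : s ≠ a := fun h => hvs (h ▸ hva)
    have hsb : s ≠ b := fun h => hvs (h ▸ hvb)
    exact hne s ⟨hs.1.lt_of_ne' hsa, hs.2.lt_of_ne hsb⟩ hus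
  have hquot : ∀ s ∈ Icc a b,
      HasDerivWithinAt (fun t => v t / u t) (wronskian u u' v v' s / u s ^ 2) (Icc a b) s :=
    fun s hs => hu.hasDerivWithinAt_div hv hs (u_ne_zero s hs)
  obtain ⟨s, hs, hs0⟩ := exists_hasDerivAt_eq_zero hab
    (fun s hs => (hquot s hs).continuousWithinAt) (by simp only [hva, hvb, zero_div])
    (fun s hs => (hquot s (Ioo_subset_Icc_self hs)).hasDerivAt (Icc_mem_nhds hs.1 hs.2))
  have hs' := Ioo_subset_Icc_self hs
  exact div_ne_zero (wronskian_ne_zero s hs') (pow_ne_zero 2 (u_ne_zero s hs')) hs0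

end IsSturmSolutionOn

lemma isSturmSolutionOn_velocity {F θ θ' : ℝ → ℝ} {S : Set ℝ}
    (hF : ∀ s ∈ S, DifferentiableAt ℝ F (θ s))
    (hθ : ∀ s ∈ S, HasDerivWithinAt θ (θ' s) S s)
    (hθ' : ∀ s ∈ S, HasDerivWithinAt θ' (-F (θ s)) S s) :
    IsSturmSolutionOn (fun s => deriv F (θ s)) θ' (fun s => -F (θ s)) S where
  hasDerivWithinAt := hθ'
  hasDerivWithinAt_deriv s hs :=
    ((hF s hs).hasDerivAt.comp_hasDerivWithinAt s (hθ s hs)).neg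

/-- Here `-F` is the force, so `F = V'` for motion in a potential `V`. -/
theorem stmt_8_general {a c : ℝ} {F θ θ' h h' : ℝ → ℝ}
    (hF : ∀ s ∈ Icc a c, DifferentiableAt ℝ F (θ s))
    (hθ : ∀ s ∈ Icc a c, HasDerivWithinAt θ (θ' s) (Icc a c) s)
    (hθ' : ∀ s ∈ Icc a c, HasDerivWithinAt θ' (-F (θ s)) (Icc a c) s)
    (hne : ∀ s ∈ Ico a c, θ' s ≠ 0)
    (hh : IsSturmSolutionOn (fun s => deriv F (θ s)) h h' (Icc a c))
    (hinit0 : h a = 0) (hinit1 : h' a ≠ 0) :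
    ∀ s ∈ Ioc a c, h s ≠ 0 := by
  intro s hs hs0
  have hsub : Icc a s ⊆ Icc a c := Icc_subset_Icc_right hs.2
  have hvel := isSturmSolutionOn_velocity hF hθ hθ'
  have hW : wronskian θ' (fun t => -F (θ t)) h h' a ≠ 0 := by
    simpa [wronskian, hinit0, hinit1] using hne a ⟨le_rfl, hs.1.trans_le hs.2⟩
  obtain ⟨t, ht, ht0⟩ :=
    (hvel.mono hsub).exists_zero_between_zeros (hh.mono hsub) hs.1 hinit0 hs0 hW
  exact hne t ⟨ht.1.le, ht.2.trans_le hs.2⟩ ht0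

theorem stmt_8 (a b : ℝ) (hab : a < b) (V : ℝ → ℝ) (hV : ContDiff ℝ 2 V)
    (θ θ' θ'' : ℝ → ℝ)
    (hθ1 : ∀ s ∈ Set.Icc a b, HasDerivAt θ (θ' s) s)
    (hθ2 : ∀ s ∈ Set.Icc a b, HasDerivAt θ' (θ'' s) s)
    (hθc : ContinuousOn θ'' (Set.Icc a b))
    (hEL : ∀ s ∈ Set.Icc a b, θ'' s + deriv V (θ s) = 0)
    (c : ℝ) (hc : c ∈ Set.Ioc a b) (hzc : θ' c = 0)
    (huniq : ∀ s ∈ Set.Icc a b, θ' s = 0 → s = c)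
    (hVc : deriv V (θ c) ≠ 0)
    (h₁ h₁' h₁'' : ℝ → ℝ)
    (hh1 : ∀ s ∈ Set.Icc a b, HasDerivAt h₁ (h₁' s) s)
    (hh2 : ∀ s ∈ Set.Icc a b, HasDerivAt h₁' (h₁'' s) s)
    (hhc : ContinuousOn h₁'' (Set.Icc a b))
    (hode : ∀ s ∈ Set.Icc a b, -h₁'' s - deriv (deriv V) (θ s) * h₁ s = 0)
    (hinit0 : h₁ a = 0) (hinit1 : h₁' a = 1) :
    ∀ s ∈ Set.Ioc a c, h₁ s ≠ 0 := by
  have hsub : Icc a c ⊆ Icc a b := Icc_subset_Icc_right hc.2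
  have hjac : IsSturmSolutionOn (fun s => deriv (deriv V) (θ s)) h₁ h₁' (Icc a c) :=
    { hasDerivWithinAt := fun s hs => (hh1 s (hsub hs)).hasDerivWithinAt
      hasDerivWithinAt_deriv := fun s hs => (hh2 s (hsub hs)).hasDerivWithinAt.congr_deriv <| by
        linarith [hode s (hsub hs)] }
  exact stmt_8_general (F := deriv V) (fun s _ => hV.differentiable_deriv_two (θ s))
    (fun s hs => (hθ1 s (hsub hs)).hasDerivWithinAt)
    (fun s hs => (hθ2 s (hsub hs)).hasDerivWithinAt.congr_deriv <| by
      linarith [hEL s (hsub hs)])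
    (fun s hs hs0 => hs.2.ne (huniq s (hsub (Ico_subset_Icc_self hs)) hs0))
    hjac hinit0 (by simp [hinit1])
end

section
/- Let f : [a,b] → ℝ be continuous and let c ∈ (a,b). For real numbers x < y in [a,b] and τ ∈ C¹([x,y],ℝ) write K_{[x,y]}[τ] = ∫_x^y (τ'(s)² + f(s)·τ(s)²) ds. Suppose there exists M > 0 such that K_{[a,c]}[τ₁] ≥ M·∫_a^c τ₁(s)² ds for every τ₁ ∈ C¹([a,c],ℝ) with τ₁'(a) = τ₁'(c) = 0, and K_{[c,b]}[τ₂] ≥ M·∫_c^b τ₂(s)² ds for every τ₂ ∈ C¹([c,b],ℝ) with τ₂'(c) = τ₂'(b) = 0. Then there exists M̄ > 0 such that K_{[a,b]}[τ] ≥ M̄·∫_a^b τ(s)² ds for every τ ∈ C¹([a,b],ℝ) with τ'(a) = τ'(b) = 0. -/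
/-!
Replacing `f` by `f - M` subtracts `M ∫ τ²` from `K_{[x,y]}[τ]`, so only the sign of a quadratic
functional matters. The condition `τ' = 0` at the endpoints costs nothing: subtracting from `τ'` a
correction with the right endpoint values that tends boundedly to `0` inside the interval, and from
`τ` its primitive, changes the functional by an arbitrarily small amount. So the two hypotheses hold
for *all* `C¹` functions on `[a, c]` and `[c, b]`, and they add up on `[a, b]`, with the same
constant `M`.
-/

open Set Filter Topology MeasureTheory

/-- The functional `K_{[x,y]}[τ]` with potential `f`; the derivative `τ'` of `τ` is a separate
argument, to be constrained by `HasContDerivOn`. -/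
noncomputable def indexForm (f : ℝ → ℝ) (x y : ℝ) (τ τ' : ℝ → ℝ) : ℝ :=
  ∫ s in x..y, (τ' s ^ 2 + f s * τ s ^ 2)

/-- `τ` is continuously differentiable on `S` with derivative `τ'`. The derivative is two-sided at
every point of `S`, so at an endpoint of an interval it also constrains `τ` outside. -/
structure HasContDerivOn (τ τ' : ℝ → ℝ) (S : Set ℝ) : Prop where
  hasDerivAt : ∀ s ∈ S, HasDerivAt τ (τ' s) s
  continuousOn_deriv : ContinuousOn τ' S

/-- A sequence of functions of `s`, indexed by `n`, with value `p` at `x` and `q` at `y`, tending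
to `0` boundedly on `(x, y)`. Subtracting it corrects the boundary values of a derivative; the
exponent is `n + 1` because at `n = 0` a power `u ^ n` would not vanish at the other endpoint. -/
noncomputable def endpointCorrection (x y p q : ℝ) (n : ℕ) (s : ℝ) : ℝ :=
  p * ((y - s) / (y - x)) ^ (n + 1) + q * ((s - x) / (y - x)) ^ (n + 1)

namespace HasContDerivOn

variable {τ τ' σ σ' : ℝ → ℝ} {S T : Set ℝ}

theorem mono (h : HasContDerivOn τ τ' T) (hST : S ⊆ T) : HasContDerivOn τ τ' S :=
  ⟨fun s hs => h.hasDerivAt s (hST hs), h.continuousOn_deriv.mono hST⟩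

theorem continuousOn (h : HasContDerivOn τ τ' S) : ContinuousOn τ S :=
  HasDerivAt.continuousOn h.hasDerivAt

theorem sub (hτ : HasContDerivOn τ τ' S) (hσ : HasContDerivOn σ σ' S) :
    HasContDerivOn (τ - σ) (τ' - σ') S :=
  ⟨fun s hs => (hτ.hasDerivAt s hs).sub (hσ.hasDerivAt s hs),
    hτ.continuousOn_deriv.sub hσ.continuousOn_deriv⟩

theorem integral_of_continuous (hτ' : Continuous τ') (x : ℝ) :
    HasContDerivOn (fun s => ∫ t in x..s, τ' t) τ' S :=
  ⟨fun s _ => (hτ'.integral_hasStrictDerivAt x s).hasDerivAt, hτ'.continuousOn⟩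

end HasContDerivOn

namespace endpointCorrection

variable {x y : ℝ} (p q : ℝ) (n : ℕ)

theorem continuous : Continuous (endpointCorrection x y p q n) := by
  unfold endpointCorrection
  fun_prop

theorem hasContDerivOn_sub {τ τ' : ℝ → ℝ} {S : Set ℝ} (hτ : HasContDerivOn τ τ' S) :
    HasContDerivOn (τ - fun s => ∫ t in x..s, endpointCorrection x y p q n t)
      (τ' - endpointCorrection x y p q n) S :=
  hτ.sub (.integral_of_continuous (continuous p q n) x)

theorem apply_left (hxy : x ≠ y) : endpointCorrection x y p q n x = p := by
  simp [endpointCorrection, sub_ne_zero.2 hxy.symm]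

theorem apply_right (hxy : x ≠ y) : endpointCorrection x y p q n y = q := by
  simp [endpointCorrection, sub_ne_zero.2 hxy.symm]

theorem abs_le {s : ℝ} (hs : s ∈ Icc x y) : |endpointCorrection x y p q n s| ≤ |p| + |q| := by
  have abs_mul_pow_le {r u : ℝ} (hu₀ : 0 ≤ u) (hu₁ : u ≤ 1) : |r * u ^ (n + 1)| ≤ |r| := by
    rw [abs_mul, abs_of_nonneg (pow_nonneg hu₀ _)]
    exact mul_le_of_le_one_right (abs_nonneg r) (pow_le_one₀ hu₀ hu₁)
  have hx : 0 ≤ s - x := sub_nonneg.2 hs.1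
  have hy : 0 ≤ y - s := sub_nonneg.2 hs.2
  refine (abs_add_le _ _).trans (add_le_add (abs_mul_pow_le ?_ ?_) (abs_mul_pow_le ?_ ?_))
  · exact div_nonneg hy (by linarith)
  · exact div_le_one_of_le₀ (by linarith) (by linarith)
  · exact div_nonneg hx (by linarith)
  · exact div_le_one_of_le₀ (by linarith) (by linarith)

theorem tendsto_zero {s : ℝ} (hs : s ∈ Ioo x y) :
    Tendsto (fun n => endpointCorrection x y p q n s) atTop (𝓝 0) := by
  have tendsto_mul_pow (r : ℝ) {u : ℝ} (hu₀ : 0 ≤ u) (hu₁ : u < 1) :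
      Tendsto (fun n : ℕ => r * u ^ (n + 1)) atTop (𝓝 0) := by
    simpa only [mul_zero] using
      ((tendsto_add_atTop_iff_nat 1).2 (tendsto_pow_atTop_nhds_zero_of_lt_one hu₀ hu₁)).const_mul r
  have hx : 0 < s - x := sub_pos.2 hs.1
  have hy : 0 < y - s := sub_pos.2 hs.2
  have hxy : 0 < y - x := by linarith
  simpa only [add_zero, endpointCorrection] using
    (tendsto_mul_pow p (div_pos hy hxy).le ((div_lt_one hxy).2 (by linarith))).add
      (tendsto_mul_pow q (div_pos hx hxy).le ((div_lt_one hxy).2 (by linarith)))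

theorem ae_tendsto_zero :
    ∀ᵐ s, s ∈ Ioc x y → Tendsto (fun n => endpointCorrection x y p q n s) atTop (𝓝 0) := by
  filter_upwards [Measure.ae_ne volume y] with s hsy hs
  exact tendsto_zero p q ⟨hs.1, lt_of_le_of_ne hs.2 hsy⟩

theorem abs_integral_le {s : ℝ} (hs : s ∈ Icc x y) :
    |∫ t in x..s, endpointCorrection x y p q n t| ≤ (|p| + |q|) * (y - x) := by
  have bound (t : ℝ) (ht : t ∈ uIoc x s) : ‖endpointCorrection x y p q n t‖ ≤ |p| + |q| := by
    rw [uIoc_of_le hs.1] at ht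
    exact abs_le p q n ⟨ht.1.le, ht.2.trans hs.2⟩
  calc |∫ t in x..s, endpointCorrection x y p q n t|
      ≤ (|p| + |q|) * |s - x| := intervalIntegral.norm_integral_le_of_norm_le_const bound
    _ = (|p| + |q|) * (s - x) := by rw [abs_of_nonneg (sub_nonneg.2 hs.1)]
    _ ≤ (|p| + |q|) * (y - x) :=
        mul_le_mul_of_nonneg_left (sub_le_sub_right hs.2 x) (by positivity)

theorem tendsto_integral_zero {s : ℝ} (hs : s ∈ Icc x y) :
    Tendsto (fun n => ∫ t in x..s, endpointCorrection x y p q n t) atTop (𝓝 0) := by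
  have mem_Ioc {t : ℝ} (ht : t ∈ uIoc x s) : t ∈ Ioc x y := by
    rw [uIoc_of_le hs.1] at ht
    exact ⟨ht.1, ht.2.trans hs.2⟩
  rw [← intervalIntegral.integral_zero (a := x) (b := s) (μ := volume)]
  refine intervalIntegral.tendsto_integral_filter_of_dominated_convergence (fun _ => |p| + |q|)
    (.of_forall fun n => (continuous p q n).aestronglyMeasurable)
    (.of_forall fun n => .of_forall fun t ht => abs_le p q n (Ioc_subset_Icc_self (mem_Ioc ht)))
    intervalIntegrable_const ?_
  filter_upwards [ae_tendsto_zero (x := x) (y := y) p q] with t hlim ht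
  exact hlim (mem_Ioc ht)

end endpointCorrection

section indexForm

variable {f τ τ' : ℝ → ℝ} {x y z M : ℝ}

theorem intervalIntegrable_indexForm (hf : IntervalIntegrable f volume x y)
    (hτ : ContinuousOn τ (uIcc x y)) (hτ' : ContinuousOn τ' (uIcc x y)) :
    IntervalIntegrable (fun s => τ' s ^ 2 + f s * τ s ^ 2) volume x y :=
  (hτ'.pow 2).intervalIntegrable.add (hf.mul_continuousOn (hτ.pow 2))

theorem indexForm_sub_const (hf : IntervalIntegrable f volume x y)
    (hτ : ContinuousOn τ (uIcc x y)) (hτ' : ContinuousOn τ' (uIcc x y)) :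
    indexForm (fun s => f s - M) x y τ τ' = indexForm f x y τ τ' - M * ∫ s in x..y, τ s ^ 2 := by
  unfold indexForm
  rw [← intervalIntegral.integral_const_mul,
    ← intervalIntegral.integral_sub (g := fun s => M * τ s ^ 2)
      (intervalIntegrable_indexForm hf hτ hτ') ((hτ.pow 2).intervalIntegrable.const_mul M)]
  congr with s
  ring

theorem indexForm_add_adjacent (hf : IntervalIntegrable f volume x z) (hy : y ∈ uIcc x z)
    (hτ : ContinuousOn τ (uIcc x z)) (hτ' : ContinuousOn τ' (uIcc x z)) :
    indexForm f x y τ τ' + indexForm f y z τ τ' = indexForm f x z τ τ' :=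
  have hint := intervalIntegrable_indexForm hf hτ hτ'
  intervalIntegral.integral_add_adjacent_intervals
    (hint.mono_set (uIcc_subset_uIcc_left hy)) (hint.mono_set (uIcc_subset_uIcc_right hy))

theorem tendsto_indexForm {ι : Type*} {l : Filter ι} [l.IsCountablyGenerated]
    {σ σ' : ι → ℝ → ℝ} {C C' : ℝ} (hf : IntervalIntegrable f volume x y)
    (hσ : ∀ i, ContinuousOn (σ i) (uIcc x y)) (hσ' : ∀ i, ContinuousOn (σ' i) (uIcc x y))
    (hC : ∀ i, ∀ s ∈ uIcc x y, |σ i s| ≤ C) (hC' : ∀ i, ∀ s ∈ uIcc x y, |σ' i s| ≤ C')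
    (hlim : ∀ᵐ s, s ∈ uIoc x y → Tendsto (fun i => σ i s) l (𝓝 (τ s)))
    (hlim' : ∀ᵐ s, s ∈ uIoc x y → Tendsto (fun i => σ' i s) l (𝓝 (τ' s))) :
    Tendsto (fun i => indexForm f x y (σ i) (σ' i)) l (𝓝 (indexForm f x y τ τ')) := by
  refine intervalIntegral.tendsto_integral_filter_of_dominated_convergence
    (fun s => C' ^ 2 + |f s| * C ^ 2) (.of_forall fun i => ?_)
    (.of_forall fun i => .of_forall fun s hs => ?_) ?_ ?_
  · exact (intervalIntegrable_indexForm hf (hσ i) (hσ' i)).def'.aestronglyMeasurable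
  · have hs' := uIoc_subset_uIcc hs
    calc |σ' i s ^ 2 + f s * σ i s ^ 2|
        ≤ |σ' i s| ^ 2 + |f s| * |σ i s| ^ 2 := by
          simp only [← abs_pow, ← abs_mul]
          exact abs_add_le (σ' i s ^ 2) (f s * σ i s ^ 2)
      _ ≤ C' ^ 2 + |f s| * C ^ 2 := by
          gcongr
          exacts [hC' i s hs', hC i s hs']
  · exact intervalIntegrable_const.add (hf.abs.mul_const _)
  · filter_upwards [hlim, hlim'] with s h h' hs
    exact ((h' hs).pow 2).add (((h hs).pow 2).const_mul (f s))

theorem tendsto_indexForm_sub_endpointCorrection (hxy : x ≤ y)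
    (hf : IntervalIntegrable f volume x y) (hτ : HasContDerivOn τ τ' (Icc x y)) (p q : ℝ) :
    Tendsto (fun n => indexForm f x y (τ - fun s => ∫ t in x..s, endpointCorrection x y p q n t)
      (τ' - endpointCorrection x y p q n)) atTop (𝓝 (indexForm f x y τ τ')) := by
  obtain ⟨B, hB⟩ := isCompact_Icc.exists_bound_of_continuousOn hτ.continuousOn
  obtain ⟨B', hB'⟩ := isCompact_Icc.exists_bound_of_continuousOn hτ.continuousOn_deriv
  refine tendsto_indexForm (C := B + (|p| + |q|) * (y - x)) (C' := B' + (|p| + |q|)) hf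
    ?_ ?_ ?_ ?_ ?_ ?_ <;> simp only [uIcc_of_le hxy, uIoc_of_le hxy]
  · exact fun n => (endpointCorrection.hasContDerivOn_sub p q n hτ).continuousOn
  · exact fun n => (endpointCorrection.hasContDerivOn_sub p q n hτ).continuousOn_deriv
  · exact fun n s hs => (abs_sub _ _).trans
      (add_le_add (hB s hs) (endpointCorrection.abs_integral_le p q n hs))
  · exact fun n s hs => (abs_sub _ _).trans
      (add_le_add (hB' s hs) (endpointCorrection.abs_le p q n hs))
  · refine .of_forall fun s hs => ?_
    simpa only [Pi.sub_apply, sub_zero] using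
      (endpointCorrection.tendsto_integral_zero p q (Ioc_subset_Icc_self hs)).const_sub (τ s)
  · filter_upwards [endpointCorrection.ae_tendsto_zero (x := x) (y := y) p q] with s hlim hs
    simpa only [Pi.sub_apply, sub_zero] using (hlim hs).const_sub (τ' s)

theorem indexForm_nonneg_of_neumann (hxy : x < y) (hf : IntervalIntegrable f volume x y)
    (h : ∀ σ σ' : ℝ → ℝ, HasContDerivOn σ σ' (Icc x y) → σ' x = 0 → σ' y = 0 →
      0 ≤ indexForm f x y σ σ')
    (hτ : HasContDerivOn τ τ' (Icc x y)) : 0 ≤ indexForm f x y τ τ' := by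
  refine ge_of_tendsto'
    (tendsto_indexForm_sub_endpointCorrection hxy.le hf hτ (τ' x) (τ' y)) fun n => h _ _ ?_ ?_ ?_
  · exact endpointCorrection.hasContDerivOn_sub _ _ n hτ
  · simp [endpointCorrection.apply_left _ _ _ hxy.ne]
  · simp [endpointCorrection.apply_right _ _ _ hxy.ne]

theorem mul_integral_sq_le_indexForm_of_neumann (hxy : x < y)
    (hf : IntervalIntegrable f volume x y)
    (h : ∀ σ σ' : ℝ → ℝ, HasContDerivOn σ σ' (Icc x y) → σ' x = 0 → σ' y = 0 →
      M * ∫ s in x..y, σ s ^ 2 ≤ indexForm f x y σ σ')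
    (hτ : HasContDerivOn τ τ' (Icc x y)) :
    M * ∫ s in x..y, τ s ^ 2 ≤ indexForm f x y τ τ' := by
  have hshift {σ σ' : ℝ → ℝ} (hσ : HasContDerivOn σ σ' (Icc x y)) :
      0 ≤ indexForm (fun s => f s - M) x y σ σ' ↔
        M * ∫ s in x..y, σ s ^ 2 ≤ indexForm f x y σ σ' := by
    rw [← uIcc_of_le hxy.le] at hσ
    rw [indexForm_sub_const hf hσ.continuousOn hσ.continuousOn_deriv, sub_nonneg]
  exact (hshift hτ).1 <| indexForm_nonneg_of_neumann hxy (hf.sub intervalIntegrable_const)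
    (fun σ σ' hσ hx hy => (hshift hσ).2 (h σ σ' hσ hx hy)) hτ

end indexForm

theorem stmt_13_general {a b c M : ℝ} {f : ℝ → ℝ} (hf : IntervalIntegrable f volume a b)
    (hc : c ∈ Ioo a b)
    (h₁ : ∀ τ₁ τ₁' : ℝ → ℝ, HasContDerivOn τ₁ τ₁' (Icc a c) → τ₁' a = 0 → τ₁' c = 0 →
      M * ∫ s in a..c, τ₁ s ^ 2 ≤ indexForm f a c τ₁ τ₁')
    (h₂ : ∀ τ₂ τ₂' : ℝ → ℝ, HasContDerivOn τ₂ τ₂' (Icc c b) → τ₂' c = 0 → τ₂' b = 0 →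
      M * ∫ s in c..b, τ₂ s ^ 2 ≤ indexForm f c b τ₂ τ₂')
    {τ τ' : ℝ → ℝ} (hτ : HasContDerivOn τ τ' (Icc a b)) :
    M * ∫ s in a..b, τ s ^ 2 ≤ indexForm f a b τ τ' := by
  have hc_mem : c ∈ uIcc a b := Icc_subset_uIcc (Ioo_subset_Icc_self hc)
  have hleft : uIcc a c ⊆ uIcc a b := uIcc_subset_uIcc_left hc_mem
  have hright : uIcc c b ⊆ uIcc a b := uIcc_subset_uIcc_right hc_mem
  have hτ_uIcc : HasContDerivOn τ τ' (uIcc a b) := by rwa [uIcc_of_le (hc.1.trans hc.2).le]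
  have hsq : IntervalIntegrable (fun s => τ s ^ 2) volume a b :=
    (hτ_uIcc.continuousOn.pow 2).intervalIntegrable
  calc M * ∫ s in a..b, τ s ^ 2
      = M * (∫ s in a..c, τ s ^ 2) + M * ∫ s in c..b, τ s ^ 2 := by
        rw [← mul_add, intervalIntegral.integral_add_adjacent_intervals
          (hsq.mono_set hleft) (hsq.mono_set hright)]
    _ ≤ indexForm f a c τ τ' + indexForm f c b τ τ' :=
        add_le_add
          (mul_integral_sq_le_indexForm_of_neumann hc.1 (hf.mono_set hleft) h₁
            (hτ.mono (Icc_subset_Icc_right hc.2.le)))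
          (mul_integral_sq_le_indexForm_of_neumann hc.2 (hf.mono_set hright) h₂
            (hτ.mono (Icc_subset_Icc_left hc.1.le)))
    _ = indexForm f a b τ τ' :=
        indexForm_add_adjacent hf hc_mem hτ_uIcc.continuousOn hτ_uIcc.continuousOn_deriv

theorem stmt_13 (a b : ℝ) (hab : a < b) (f : ℝ → ℝ)
    (hf : ContinuousOn f (Set.Icc a b))
    (c : ℝ) (hc : c ∈ Set.Ioo a b)
    (M : ℝ) (hM : 0 < M)
    (h₁ : ∀ τ₁ τ₁' : ℝ → ℝ,
      (∀ s ∈ Set.Icc a c, HasDerivAt τ₁ (τ₁' s) s) →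
      ContinuousOn τ₁' (Set.Icc a c) →
      τ₁' a = 0 → τ₁' c = 0 →
      (∫ s in a..c, (τ₁' s ^ 2 + f s * τ₁ s ^ 2)) ≥ M * ∫ s in a..c, τ₁ s ^ 2)
    (h₂ : ∀ τ₂ τ₂' : ℝ → ℝ,
      (∀ s ∈ Set.Icc c b, HasDerivAt τ₂ (τ₂' s) s) →
      ContinuousOn τ₂' (Set.Icc c b) →
      τ₂' c = 0 → τ₂' b = 0 →
      (∫ s in c..b, (τ₂' s ^ 2 + f s * τ₂ s ^ 2)) ≥ M * ∫ s in c..b, τ₂ s ^ 2) :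
    ∃ M' > 0, ∀ τ τ' : ℝ → ℝ,
      (∀ s ∈ Set.Icc a b, HasDerivAt τ (τ' s) s) →
      ContinuousOn τ' (Set.Icc a b) →
      τ' a = 0 → τ' b = 0 →
      (∫ s in a..b, (τ' s ^ 2 + f s * τ s ^ 2)) ≥ M' * ∫ s in a..b, τ s ^ 2 := by
  exact ⟨M, hM, fun τ τ' hτ hτ' _ _ => stmt_13_general (hf.intervalIntegrable_of_Icc hab.le) hc
    (fun τ₁ τ₁' h => h₁ τ₁ τ₁' h.1 h.2) (fun τ₂ τ₂' h => h₂ τ₂ τ₂' h.1 h.2) ⟨hτ, hτ'⟩⟩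
end

section
/- Let θ ∈ C²([s₁,s₂],ℝ) satisfy θ''(s) + V'(θ(s)) = 0 for all s ∈ [s₁,s₂], with no s ∈ [s₁,s₂] such that θ'(s) = 0 and V'(θ(s)) = 0 simultaneously, and assume V' and V'' have no common zero. Assume the sets Z_h = {s ∈ [s₁,s₂] : θ'(s) = 0}, Z_m = {s ∈ [s₁,s₂] : V'(θ(s)) = 0 and V''(θ(s)) > 0}, and Z_M = {s ∈ [s₁,s₂] : V'(θ(s)) = 0 and V''(θ(s)) < 0} are finite, and set I = |Z_h| and J = |Z_m| − |Z_M| (as integers). Then I − 1 ≤ J ≤ I + 1, and consequently J ≥ −1. -/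
/-!
The function `h = θ' · V'(θ)` vanishes exactly on the two axes of the phase plane `(V'(θ), θ')`. By
the equation of motion, `h' = -V'(θ)² < 0` on the axis `θ' = 0`, which is therefore only crossed
clockwise, while `h' = V''(θ) θ'²` on the axis `V'(θ) = 0`. So all zeros of `h` are simple; `h`
increases through zero at the minima of `V`, and decreases through zero at the zeros of `θ'` and at
the maxima of `V`. Simple zeros alternate in direction, so the numbers of the two kinds differ by at
most one.
-/

open Set Filter Topology

section SimpleZeros

variable {f f' : ℝ → ℝ} {a b x y p q : ℝ}

/-- The zeros in `S` of `f` at which `f` increases through zero. The derivative is passed explicitly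
as `f'`, so that it may be one-sided at the endpoints of an interval. -/
def upZeros (f f' : ℝ → ℝ) (S : Set ℝ) : Set ℝ := {s ∈ S | f s = 0 ∧ 0 < f' s}

/-- The zeros in `S` of `f` at which `f` decreases through zero; as in `upZeros`, `f'` is the
derivative of `f`. -/
def downZeros (f f' : ℝ → ℝ) (S : Set ℝ) : Set ℝ := {s ∈ S | f s = 0 ∧ f' s < 0}

theorem upZeros_neg (f f' : ℝ → ℝ) (S : Set ℝ) : upZeros (-f) (-f') S = downZeros f f' S := by
  simp only [upZeros, downZeros, Pi.neg_apply, neg_eq_zero, Left.neg_pos_iff]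

theorem downZeros_neg (f f' : ℝ → ℝ) (S : Set ℝ) : downZeros (-f) (-f') S = upZeros f f' S := by
  rw [← upZeros_neg, neg_neg, neg_neg]

theorem eventually_nhdsGT_pos_of_hasDerivWithinAt_pos (hf : HasDerivWithinAt f p (Ioi x) x)
    (hx : f x = 0) (hp : 0 < p) : ∀ᶠ t in 𝓝[>] x, 0 < f t := by
  have hslope := (hasDerivWithinAt_iff_tendsto_slope' self_notMem_Ioi).1 hf
  filter_upwards [hslope.eventually_const_lt hp, self_mem_nhdsWithin] with t ht hxt
  exact pos_of_slope_pos hxt ht hx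

theorem eventually_nhdsLT_neg_of_hasDerivWithinAt_pos (hf : HasDerivWithinAt f p (Iio x) x)
    (hx : f x = 0) (hp : 0 < p) : ∀ᶠ t in 𝓝[<] x, f t < 0 := by
  have hslope := (hasDerivWithinAt_iff_tendsto_slope' self_notMem_Iio).1 hf
  filter_upwards [hslope.eventually_const_lt hp, self_mem_nhdsWithin] with t ht htx
  exact neg_of_slope_pos htx ht hx

theorem exists_mem_Ioo_eq_zero_of_hasDerivWithinAt_pos (hxy : x < y)
    (hcont : ContinuousOn f (Ioo x y))
    (hfx : HasDerivWithinAt f p (Ioi x) x) (hx : f x = 0) (hp : 0 < p)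
    (hfy : HasDerivWithinAt f q (Iio y) y) (hy : f y = 0) (hq : 0 < q) :
    ∃ z ∈ Ioo x y, f z = 0 :=
  isPreconnected_Ioo.intermediate_value₂_eventually₂
    (le_principal_iff.2 (Ioo_mem_nhdsLT hxy)) (le_principal_iff.2 (Ioo_mem_nhdsGT hxy))
    hcont continuousOn_const
    ((eventually_nhdsLT_neg_of_hasDerivWithinAt_pos hfy hy hq).mono fun _ => le_of_lt)
    ((eventually_nhdsGT_pos_of_hasDerivWithinAt_pos hfx hx hp).mono fun _ => le_of_lt)

theorem exists_mem_Ioo_eq_zero_of_mem_upZeros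
    (hf : ∀ s ∈ Icc a b, HasDerivWithinAt f (f' s) (Icc a b) s)
    (hx : x ∈ upZeros f f' (Icc a b)) (hy : y ∈ upZeros f f' (Icc a b)) (hxy : x < y) :
    ∃ z ∈ Ioo x y, f z = 0 := by
  obtain ⟨hxI, hfx, hpx⟩ := hx
  obtain ⟨hyI, hfy, hpy⟩ := hy
  have hsub : Icc x y ⊆ Icc a b := Icc_subset_Icc hxI.1 hyI.2
  have hright : HasDerivWithinAt f (f' x) (Ioi x) x :=
    ((hf x hxI).mono hsub).mono_of_mem_nhdsWithin (Icc_mem_nhdsGT hxy)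
  have hleft : HasDerivWithinAt f (f' y) (Iio y) y :=
    ((hf y hyI).mono hsub).mono_of_mem_nhdsWithin (Icc_mem_nhdsLT hxy)
  have hcont : ContinuousOn f (Icc a b) := fun s hs => (hf s hs).continuousWithinAt
  exact exists_mem_Ioo_eq_zero_of_hasDerivWithinAt_pos hxy
    (hcont.mono (Ioo_subset_Icc_self.trans hsub)) hright hfx hpx hleft hfy hpy

theorem finite_zeros_of_hasDerivWithinAt_ne_zero {𝕜 E : Type*} [NontriviallyNormedField 𝕜]
    [NormedAddCommGroup E] [NormedSpace 𝕜 E] {f f' : 𝕜 → E} {K : Set 𝕜} (hK : IsCompact K)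
    (hf : ∀ s ∈ K, HasDerivWithinAt f (f' s) K s) (hsimple : ∀ s ∈ K, f s = 0 → f' s ≠ 0) :
    {s ∈ K | f s = 0}.Finite := by
  by_contra hinf
  obtain ⟨z, hz, hacc⟩ := Set.Infinite.exists_accPt_of_subset_isCompact hinf hK (sep_subset K _)
  have hfreq : ∃ᶠ s in 𝓝[K \ {z}] z, f s = 0 := by
    rw [frequently_nhdsWithin_iff]
    exact (accPt_iff_frequently.1 hacc).mono fun s hs => ⟨hs.2.2, hs.2.1, hs.1⟩
  have hfz : f z = 0 :=
    have htendsto : Tendsto f (𝓝[K \ {z}] z) (𝓝 (f z)) :=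
      (hf z hz).continuousWithinAt.mono sdiff_subset
    (isClosed_singleton (x := (0 : E))).mem_of_frequently_of_tendsto hfreq htendsto
  exact hfreq ((hf z hz).eventually_ne (hsimple z hz hfz))

theorem ncard_upZeros_le_ncard_downZeros_add_one
    (hf : ∀ s ∈ Icc a b, HasDerivWithinAt f (f' s) (Icc a b) s)
    (hsimple : ∀ s ∈ Icc a b, f s = 0 → f' s ≠ 0) :
    (upZeros f f' (Icc a b)).ncard ≤ (downZeros f f' (Icc a b)).ncard + 1 := by
  have hfin := finite_zeros_of_hasDerivWithinAt_ne_zero isCompact_Icc hf hsimple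
  have hup : (upZeros f f' (Icc a b)).Finite := hfin.subset fun s hs => ⟨hs.1, hs.2.1⟩
  have hdown : (downZeros f f' (Icc a b)).Finite := hfin.subset fun s hs => ⟨hs.1, hs.2.1⟩
  rw [ncard_eq_toFinset_card _ hup, ncard_eq_toFinset_card _ hdown]
  refine Finset.card_le_of_interleaved fun x hx y hy hxy hconsec => ?_
  simp only [Finite.mem_toFinset] at hx hy hconsec ⊢
  obtain ⟨z, hz, hfz⟩ := exists_mem_Ioo_eq_zero_of_mem_upZeros hf hx hy hxy
  have hzI : z ∈ Icc a b := ⟨hx.1.1.trans hz.1.le, hz.2.le.trans hy.1.2⟩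
  have hnotpos : ¬ 0 < f' z := fun hpos => hconsec z ⟨hzI, hfz, hpos⟩ hz
  exact ⟨z, ⟨hzI, hfz, (not_lt.1 hnotpos).lt_of_ne (hsimple z hzI hfz)⟩, hz⟩

theorem ncard_downZeros_le_ncard_upZeros_add_one
    (hf : ∀ s ∈ Icc a b, HasDerivWithinAt f (f' s) (Icc a b) s)
    (hsimple : ∀ s ∈ Icc a b, f s = 0 → f' s ≠ 0) :
    (downZeros f f' (Icc a b)).ncard ≤ (upZeros f f' (Icc a b)).ncard + 1 := by
  simpa only [upZeros_neg, downZeros_neg] using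
    ncard_upZeros_le_ncard_downZeros_add_one (f := -f) (f' := -f') (fun s hs => (hf s hs).neg)
      fun s hs h0 => neg_ne_zero.2 (hsimple s hs (neg_eq_zero.1 h0))

end SimpleZeros

section PlanarCurves

variable {f f' g g' : ℝ → ℝ} {S : Set ℝ} {a b : ℝ}

theorem upZeros_mul (hclockwise : ∀ s ∈ S, f s = 0 → f' s * g s < 0) :
    upZeros (f * g) (f' * g + f * g') S = {s ∈ S | g s = 0 ∧ 0 < f s * g' s} := by
  ext s
  simp only [upZeros, mem_ofPred_eq, Pi.mul_apply, Pi.add_apply, mul_eq_zero]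
  refine and_congr_right fun hs => ⟨?_, ?_⟩
  · rintro ⟨hf0 | hg0, hpos⟩
    · rw [hf0, zero_mul, add_zero] at hpos
      exact absurd hpos (hclockwise s hs hf0).not_gt
    · exact ⟨hg0, by simpa only [hg0, mul_zero, zero_add] using hpos⟩
  · rintro ⟨hg0, hpos⟩
    exact ⟨Or.inr hg0, by rwa [hg0, mul_zero, zero_add]⟩

theorem downZeros_mul (hclockwise : ∀ s ∈ S, f s = 0 → f' s * g s < 0) :
    downZeros (f * g) (f' * g + f * g') S =
      {s ∈ S | f s = 0} ∪ {s ∈ S | g s = 0 ∧ f s * g' s < 0} := by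
  ext s
  simp only [downZeros, mem_union, mem_ofPred_eq, Pi.mul_apply, Pi.add_apply, mul_eq_zero,
    ← and_or_left]
  refine and_congr_right fun hs => ⟨?_, ?_⟩
  · rintro ⟨hf0 | hg0, hneg⟩
    · exact Or.inl hf0
    · exact Or.inr ⟨hg0, by simpa only [hg0, mul_zero, zero_add] using hneg⟩
  · rintro (hf0 | ⟨hg0, hneg⟩)
    · exact ⟨Or.inl hf0, by simpa only [hf0, zero_mul, add_zero] using hclockwise s hs hf0⟩
    · exact ⟨Or.inr hg0, by rwa [hg0, mul_zero, zero_add]⟩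

theorem simple_zeros_mul (hclockwise : ∀ s ∈ S, f s = 0 → f' s * g s < 0)
    (htransverse : ∀ s ∈ S, g s = 0 → f s * g' s ≠ 0) :
    ∀ s ∈ S, (f * g) s = 0 → (f' * g + f * g') s ≠ 0 := by
  intro s hs h0
  simp only [Pi.mul_apply, Pi.add_apply, mul_eq_zero] at h0 ⊢
  rcases h0 with hf0 | hg0
  · simpa only [hf0, zero_mul, add_zero] using (hclockwise s hs hf0).ne
  · simpa only [hg0, mul_zero, zero_add] using htransverse s hs hg0

theorem finite_axis_crossings
    (hf : ∀ s ∈ Icc a b, HasDerivWithinAt f (f' s) (Icc a b) s)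
    (hg : ∀ s ∈ Icc a b, HasDerivWithinAt g (g' s) (Icc a b) s)
    (hclockwise : ∀ s ∈ Icc a b, f s = 0 → f' s * g s < 0)
    (htransverse : ∀ s ∈ Icc a b, g s = 0 → f s * g' s ≠ 0) :
    {s ∈ Icc a b | f s = 0 ∨ g s = 0}.Finite := by
  simpa only [Pi.mul_apply, mul_eq_zero] using
    finite_zeros_of_hasDerivWithinAt_ne_zero isCompact_Icc
      (fun s hs => (hf s hs).mul (hg s hs)) (simple_zeros_mul hclockwise htransverse)

/-- Up to one, both counts are the clockwise half turns of the curve `(g, f)` about the origin: one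
is read off on the axis `f = 0`, which is only crossed clockwise, the other on the axis `g = 0`. -/
theorem abs_signed_crossings_sub_crossings_le_one
    (hf : ∀ s ∈ Icc a b, HasDerivWithinAt f (f' s) (Icc a b) s)
    (hg : ∀ s ∈ Icc a b, HasDerivWithinAt g (g' s) (Icc a b) s)
    (hclockwise : ∀ s ∈ Icc a b, f s = 0 → f' s * g s < 0)
    (htransverse : ∀ s ∈ Icc a b, g s = 0 → f s * g' s ≠ 0) :
    |({s ∈ Icc a b | g s = 0 ∧ 0 < f s * g' s}.ncard : ℤ) -
        {s ∈ Icc a b | g s = 0 ∧ f s * g' s < 0}.ncard - {s ∈ Icc a b | f s = 0}.ncard| ≤ 1 := by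
  have hderiv : ∀ s ∈ Icc a b,
      HasDerivWithinAt (f * g) ((f' * g + f * g') s) (Icc a b) s :=
    fun s hs => (hf s hs).mul (hg s hs)
  have hsimple := simple_zeros_mul hclockwise htransverse
  have hfin := finite_axis_crossings hf hg hclockwise htransverse
  have hdisj : Disjoint {s ∈ Icc a b | f s = 0} {s ∈ Icc a b | g s = 0 ∧ f s * g' s < 0} :=
    disjoint_left.2 fun s hs hs' => htransverse s hs.1 hs'.2.1 (by rw [hs.2, zero_mul])
  have hdown : (downZeros (f * g) (f' * g + f * g') (Icc a b)).ncard =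
      {s ∈ Icc a b | f s = 0}.ncard + {s ∈ Icc a b | g s = 0 ∧ f s * g' s < 0}.ncard := by
    rw [downZeros_mul hclockwise, ncard_union_eq hdisj
      (hfin.subset fun s hs => ⟨hs.1, Or.inl hs.2⟩)
      (hfin.subset fun s hs => ⟨hs.1, Or.inr hs.2.1⟩)]
  have hle := ncard_upZeros_le_ncard_downZeros_add_one hderiv hsimple
  have hge := ncard_downZeros_le_ncard_upZeros_add_one hderiv hsimple
  rw [hdown, upZeros_mul hclockwise] at hle hge
  rw [abs_le]
  omega

end PlanarCurves

/-- Motion in the force field `-F`, which replaces `-V'`, with time-dependent friction `c`. -/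
theorem stmt_14_general {a b : ℝ} {F c θ θ' θ'' : ℝ → ℝ}
    (hF : ∀ s ∈ Icc a b, DifferentiableAt ℝ F (θ s))
    (hθ : ∀ s ∈ Icc a b, HasDerivWithinAt θ (θ' s) (Icc a b) s)
    (hθ' : ∀ s ∈ Icc a b, HasDerivWithinAt θ' (θ'' s) (Icc a b) s)
    (hmotion : ∀ s ∈ Icc a b, θ'' s + c s * θ' s + F (θ s) = 0)
    (hnosim : ∀ s ∈ Icc a b, ¬(θ' s = 0 ∧ F (θ s) = 0))
    (hnodeg : ∀ s ∈ Icc a b, ¬(F (θ s) = 0 ∧ deriv F (θ s) = 0)) :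
    {s ∈ Icc a b | θ' s = 0 ∨ F (θ s) = 0}.Finite ∧
      |({s ∈ Icc a b | F (θ s) = 0 ∧ 0 < deriv F (θ s)}.ncard : ℤ) -
        {s ∈ Icc a b | F (θ s) = 0 ∧ deriv F (θ s) < 0}.ncard -
        {s ∈ Icc a b | θ' s = 0}.ncard| ≤ 1 := by
  have hforce : ∀ s ∈ Icc a b,
      HasDerivWithinAt (fun t => F (θ t)) (deriv F (θ s) * θ' s) (Icc a b) s :=
    fun s hs => (hF s hs).hasDerivAt.comp_hasDerivWithinAt s (hθ s hs)
  have hclockwise : ∀ s ∈ Icc a b, θ' s = 0 → θ'' s * F (θ s) < 0 := fun s hs h0 => by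
    have hFne : F (θ s) ≠ 0 := fun hF0 => hnosim s hs ⟨h0, hF0⟩
    have hθ''_eq : θ'' s = -F (θ s) := by
      simpa only [h0, mul_zero, add_zero] using eq_neg_of_add_eq_zero_left (hmotion s hs)
    rw [hθ''_eq, neg_mul]
    exact neg_neg_of_pos (mul_self_pos.2 hFne)
  have hsq : ∀ s ∈ Icc a b, F (θ s) = 0 → 0 < θ' s * θ' s :=
    fun s hs hF0 => mul_self_pos.2 fun h0 => hnosim s hs ⟨h0, hF0⟩
  have htransverse : ∀ s ∈ Icc a b, F (θ s) = 0 → θ' s * (deriv F (θ s) * θ' s) ≠ 0 :=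
    fun s hs hF0 => by
      rw [mul_left_comm]
      exact mul_ne_zero (fun h0 => hnodeg s hs ⟨hF0, h0⟩) (hsq s hs hF0).ne'
  have hmin : {s ∈ Icc a b | F (θ s) = 0 ∧ 0 < θ' s * (deriv F (θ s) * θ' s)} =
      {s ∈ Icc a b | F (θ s) = 0 ∧ 0 < deriv F (θ s)} := by
    ext s
    refine and_congr_right fun hs => and_congr_right fun hF0 => ?_
    rw [mul_left_comm, mul_pos_iff_of_pos_right (hsq s hs hF0)]
  have hmax : {s ∈ Icc a b | F (θ s) = 0 ∧ θ' s * (deriv F (θ s) * θ' s) < 0} =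
      {s ∈ Icc a b | F (θ s) = 0 ∧ deriv F (θ s) < 0} := by
    ext s
    refine and_congr_right fun hs => and_congr_right fun hF0 => ?_
    rw [mul_left_comm, ← not_le, mul_nonneg_iff_of_pos_right (hsq s hs hF0), not_le]
  rw [← hmin, ← hmax]
  exact ⟨finite_axis_crossings hθ' hforce hclockwise htransverse,
    abs_signed_crossings_sub_crossings_le_one hθ' hforce hclockwise htransverse⟩

theorem stmt_14 (s₁ s₂ : ℝ) (hs : s₁ < s₂) (V : ℝ → ℝ) (hV : ContDiff ℝ 2 V)
    (θ θ' θ'' : ℝ → ℝ)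
    (hθ1 : ∀ s ∈ Set.Icc s₁ s₂, HasDerivAt θ (θ' s) s)
    (hθ2 : ∀ s ∈ Set.Icc s₁ s₂, HasDerivAt θ' (θ'' s) s)
    (hθc : ContinuousOn θ'' (Set.Icc s₁ s₂))
    (hEL : ∀ s ∈ Set.Icc s₁ s₂, θ'' s + deriv V (θ s) = 0)
    (hnosim : ∀ s ∈ Set.Icc s₁ s₂, ¬(θ' s = 0 ∧ deriv V (θ s) = 0))
    (hVnodeg : ∀ x : ℝ, ¬(deriv V x = 0 ∧ deriv (deriv V) x = 0))
    (hZh : {s : ℝ | s ∈ Set.Icc s₁ s₂ ∧ θ' s = 0}.Finite)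
    (hZm : {s : ℝ | s ∈ Set.Icc s₁ s₂ ∧ deriv V (θ s) = 0 ∧
      0 < deriv (deriv V) (θ s)}.Finite)
    (hZM : {s : ℝ | s ∈ Set.Icc s₁ s₂ ∧ deriv V (θ s) = 0 ∧
      deriv (deriv V) (θ s) < 0}.Finite)
    (I J : ℤ)
    (hI : I = ({s : ℝ | s ∈ Set.Icc s₁ s₂ ∧ θ' s = 0}.ncard : ℤ))
    (hJ : J = ({s : ℝ | s ∈ Set.Icc s₁ s₂ ∧ deriv V (θ s) = 0 ∧
        0 < deriv (deriv V) (θ s)}.ncard : ℤ) -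
      ({s : ℝ | s ∈ Set.Icc s₁ s₂ ∧ deriv V (θ s) = 0 ∧
        deriv (deriv V) (θ s) < 0}.ncard : ℤ)) :
    I - 1 ≤ J ∧ J ≤ I + 1 ∧ -1 ≤ J := by
  have hV' : Differentiable ℝ (deriv V) := hV.differentiable_deriv_two
  have hindex := abs_le.1 (stmt_14_general (c := 0) (fun s _ => hV' (θ s))
    (fun s hs => (hθ1 s hs).hasDerivWithinAt) (fun s hs => (hθ2 s hs).hasDerivWithinAt)
    (by simpa using hEL) hnosim fun s _ => hVnodeg (θ s)).2
  omega
end
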